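/- There exists a constant C > 0 such that for every T with 0 < T < 1 and every finitely supported c : ℤ → ℂ, the function u(t,x) = Σ_{k∈ℤ} c(k) e^{−ik²t} e^{ikx} satisfies ( ∫_{−T}^{T} ∫_𝕋 |u(t,x)|⁴ dx dt )^{1/4} ≤ C T^{1/8} ( Σ_{k∈ℤ} |c(k)|² )^{1/2}. -/

import Mathlib

/-!
For fixed `t` the square `|u(t,x)|²` is a trigonometric polynomial in `x` whose `n`-th coefficient
is, up to a unimodular factor, `A_n(t) = Σ_l c(l+n) conj(c(l)) e^{-2ilnt}`, because
`(l+n)² - l² = n² + 2ln` (`normSq_freeEvolution`). Parseval in `x` therefore gives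
`∫ |u|⁴ dx = 2π Σ_n |A_n(t)|²` (`integral_norm_pow_four`), and each `A_n` is integrated over
`[-T, T]` separately (`integral_autocorr_le`). Write `E = Σ |c(k)|²`.

* If `|n| < T^{-1/2}`, then `|A_n(t)| ≤ E` by Cauchy–Schwarz, so the integral is at most `2TE²`;
  there are at most `3T^{-1/2}` such `n`, so they contribute `O(T^{1/2}E²)`.
* If `|n| ≥ T^{-1/2}`, then `A_n` has period `π/|n| ≤ πT^{1/2}` in `t`. Covering `[-T, T]` by periods
  and applying Parseval in `t` bounds the integral by
  `(2T + π/|n|) Σ_l |c(l+n)|²|c(l)|² ≤ 6T^{1/2} Σ_l |c(l+n)|²|c(l)|²`,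
  and the sum of these over all `n` is at most `6T^{1/2}E²`.

Altogether `∫∫ |u|⁴ ≤ 24π T^{1/2} E²`, and the claim is the fourth root of this.
-/


noncomputable section

open Real Complex

/-- The free Schrödinger evolution of the trigonometric polynomial `φ = Σ_k c(k)e^{ikx}`:
`u(t,x) = Σ_k c(k) e^{−ik²t} e^{ikx}`. -/
def freeEvolution (c : ℤ → ℂ) (t x : ℝ) : ℂ :=
  ∑' k : ℤ, c k * Complex.exp (-Complex.I * (k : ℂ) ^ 2 * (t : ℂ)) *
    Complex.exp (Complex.I * (k : ℂ) * (x : ℂ))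

/-! ### Parseval and its version on long intervals -/

/-- Parseval's identity for trigonometric polynomials. -/
lemma integral_norm_sq_trigPoly (S : Finset ℤ) (a : ℤ → ℂ) :
    ∫ x in (0:ℝ)..(2 * π), ‖∑ k ∈ S, a k * cexp (I * k * x)‖ ^ 2
      = 2 * π * ∑ k ∈ S, ‖a k‖ ^ 2 := by
  have orth : ∀ k l : ℤ, ∫ x in (0:ℝ)..(2 * π), cexp (I * (k - l) * x)
      = if k = l then 2 * (π : ℂ) else 0 := by
    intro k l
    split_ifs with h
    · subst h; simp
    · have hkl : I * ((k : ℂ) - l) ≠ 0 :=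
        mul_ne_zero I_ne_zero (sub_ne_zero.2 (by exact_mod_cast h))
      rw [integral_exp_mul_complex hkl]
      have h1 : I * ((k : ℂ) - l) * ((2 * π : ℝ) : ℂ) = ((k - l : ℤ) : ℂ) * (2 * π * I) := by
        push_cast; ring
      rw [h1, Complex.exp_int_mul_two_pi_mul_I]
      simp
  have expand : ∀ x : ℝ, ((‖∑ k ∈ S, a k * cexp (I * k * x)‖ ^ 2 : ℝ) : ℂ)
      = ∑ k ∈ S, ∑ l ∈ S, a k * (starRingEnd ℂ) (a l) * cexp (I * (k - l) * x) := by
    intro x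
    push_cast
    rw [← Complex.mul_conj', map_sum, Finset.sum_mul_sum]
    refine Finset.sum_congr rfl fun k _ => Finset.sum_congr rfl fun l _ => ?_
    have : cexp (I * (k - l) * x) = cexp (I * k * x) * (starRingEnd ℂ) (cexp (I * l * x)) := by
      rw [← Complex.exp_conj, ← Complex.exp_add]
      congr 1
      simp
      ring
    rw [this, map_mul]
    ring
  apply Complex.ofReal_injective
  rw [← intervalIntegral.integral_ofReal]
  simp_rw [expand]
  rw [intervalIntegral.integral_finsetSum
    fun k _ => Continuous.intervalIntegrable (by fun_prop) _ _]
  push_cast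
  rw [Finset.mul_sum]
  refine Finset.sum_congr rfl fun k hk => ?_
  rw [intervalIntegral.integral_finsetSum
    fun l _ => Continuous.intervalIntegrable (by fun_prop) _ _]
  simp_rw [intervalIntegral.integral_const_mul, orth]
  simp [hk, Complex.mul_conj']
  ring

/-- A symmetric interval of half-length `L` is covered by at most `L / π + 1` periods. -/
lemma integral_norm_sq_trigPoly_le (S : Finset ℤ) (a : ℤ → ℂ) {L : ℝ} (hL : 0 ≤ L) :
    ∫ x in (-L)..L, ‖∑ k ∈ S, a k * cexp (I * k * x)‖ ^ 2
      ≤ (2 * L + 2 * π) * ∑ k ∈ S, ‖a k‖ ^ 2 := by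
  set P : ℝ → ℝ := fun x => ‖∑ k ∈ S, a k * cexp (I * k * x)‖ ^ 2 with hP
  have hcont : Continuous P := by fun_prop
  have hper : Function.Periodic P (2 * π) := by
    intro x
    simp only [hP]
    congr 2
    refine Finset.sum_congr rfl fun k _ => ?_
    have : I * k * ((x + 2 * π : ℝ) : ℂ) = I * k * x + k * (2 * π * I) := by push_cast; ring
    rw [this, Complex.exp_add, Complex.exp_int_mul_two_pi_mul_I, mul_one]
  set M : ℕ := ⌈L / π⌉₊
  have hM1 : L ≤ M * π := (div_le_iff₀ pi_pos).1 (Nat.le_ceil _)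
  have hM2 : (M : ℝ) * π ≤ L + π := by
    have h := (Nat.ceil_lt_add_one (div_nonneg hL pi_pos.le)).le
    calc (M : ℝ) * π ≤ (L / π + 1) * π := by gcongr
      _ = L + π := by field_simp
  have hE : 0 ≤ ∑ k ∈ S, ‖a k‖ ^ 2 := by positivity
  calc ∫ x in (-L)..L, P x ≤ ∫ x in (-L)..(-L + (M : ℤ) • (2 * π)), P x := by
        refine intervalIntegral.integral_mono_interval le_rfl (by linarith) ?_
          (Filter.Eventually.of_forall fun x => by positivity) (hcont.intervalIntegrable _ _)
        simp only [zsmul_eq_mul, Int.cast_natCast]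
        linarith
    _ = M * (2 * π * ∑ k ∈ S, ‖a k‖ ^ 2) := by
        rw [hper.intervalIntegral_add_zsmul_eq _ _ (fun t₁ t₂ => hcont.intervalIntegrable t₁ t₂),
          hper.intervalIntegral_add_eq (-L) 0, zero_add, integral_norm_sq_trigPoly]
        simp
    _ = 2 * (M * π) * ∑ k ∈ S, ‖a k‖ ^ 2 := by ring
    _ ≤ 2 * (L + π) * ∑ k ∈ S, ‖a k‖ ^ 2 := by gcongr
    _ = _ := by ring

lemma integral_norm_sq_trigPoly_dilate_le (S : Finset ℤ) (a : ℤ → ℂ) {T m : ℝ} (hT : 0 < T)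
    (hm : m ≠ 0) :
    ∫ t in (-T)..T, ‖∑ k ∈ S, a k * cexp (I * k * (m * t : ℝ))‖ ^ 2
      ≤ (2 * T + 2 * π / |m|) * ∑ k ∈ S, ‖a k‖ ^ 2 := by
  have key : ∫ t in (-T)..T, ‖∑ k ∈ S, a k * cexp (I * k * (m * t : ℝ))‖ ^ 2
      = |m|⁻¹ * ∫ x in (-(|m| * T))..(|m| * T), ‖∑ k ∈ S, a k * cexp (I * k * x)‖ ^ 2 := by
    rw [intervalIntegral.integral_comp_mul_left
      (fun x : ℝ => ‖∑ k ∈ S, a k * cexp (I * k * x)‖ ^ 2) hm]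
    rcases abs_cases m with ⟨h, _⟩ | ⟨h, _⟩
    · rw [h, smul_eq_mul, mul_neg]
    · rw [h, smul_eq_mul, mul_neg, neg_mul, neg_neg, intervalIntegral.integral_symm, inv_neg]
      ring
  have hm' : 0 < |m| := abs_pos.2 hm
  rw [key]
  calc _ ≤ |m|⁻¹ * ((2 * (|m| * T) + 2 * π) * ∑ k ∈ S, ‖a k‖ ^ 2) := by
        gcongr
        exact integral_norm_sq_trigPoly_le S a (by positivity)
    _ = _ := by field_simp

/-! ### Fourier coefficients of `|u|²` -/

/-- The `n`-th Fourier coefficient in `x` of `|u(t,x)|²`, up to the unimodular factor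
`e^{-in²t}`, where `u` is the free evolution of `c` and `S` contains the support of `c`. -/
def autocorr (S : Finset ℤ) (c : ℤ → ℂ) (n : ℤ) (t : ℝ) : ℂ :=
  ∑ l ∈ S, (c (l + n) * (starRingEnd ℂ) (c l)) * cexp (I * l * (-2 * n * t : ℝ))

lemma sum_shift_le {S : Finset ℤ} {f : ℤ → ℝ} (hf : ∀ k, 0 ≤ f k) (hS : ∀ k ∉ S, f k = 0)
    (A : Finset ℤ) (n : ℤ) : ∑ l ∈ A, f (l + n) ≤ ∑ k ∈ S, f k := by
  classical
  rw [← Finset.sum_image (f := f) (g := fun l => l + n) (fun x _ y _ h => by simpa using h)]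
  rw [Finset.sum_subset (Finset.subset_union_right (s₁ := A.image fun l => l + n))
    (fun k _ hk => hS k hk)]
  exact Finset.sum_le_sum_of_subset_of_nonneg Finset.subset_union_left fun _ _ _ => hf _

lemma norm_autocorr_le {S : Finset ℤ} {c : ℤ → ℂ} (hS : ∀ k ∉ S, c k = 0) (n : ℤ) (t : ℝ) :
    ‖autocorr S c n t‖ ≤ ∑ k ∈ S, ‖c k‖ ^ 2 := by
  have h1 := sum_shift_le (S := S) (f := fun k => ‖c k‖ ^ 2) (fun k => by positivity)
    (fun k hk => by simp [hS k hk]) S n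
  have h2 : ‖autocorr S c n t‖ ≤ ∑ l ∈ S, (‖c (l + n)‖ ^ 2 + ‖c l‖ ^ 2) / 2 := by
    refine (norm_sum_le _ _).trans (Finset.sum_le_sum fun l _ => ?_)
    have : ‖cexp (I * l * (-2 * n * t : ℝ))‖ = 1 := by
      rw [show I * l * (-2 * n * t : ℝ) = ((l * (-2 * n * t) : ℝ) : ℂ) * I by push_cast; ring]
      exact Complex.norm_exp_ofReal_mul_I _
    rw [norm_mul, this, norm_mul, RCLike.norm_conj, mul_one]
    nlinarith [sq_nonneg (‖c (l + n)‖ - ‖c l‖)]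
  rw [← Finset.sum_div, Finset.sum_add_distrib] at h2
  linarith

lemma freeEvolution_eq_sum {S : Finset ℤ} {c : ℤ → ℂ} (hS : ∀ k ∉ S, c k = 0) (t x : ℝ) :
    freeEvolution c t x
      = ∑ k ∈ S, c k * cexp (-I * (k : ℂ) ^ 2 * t) * cexp (I * (k : ℂ) * x) :=
  tsum_eq_sum fun k hk => by simp [hS k hk]

/-- The Fourier expansion of `|u(t,x)|²` in `x`; the frequencies `n` are differences `k - l` of
elements of `S`, and `k² - l² = n² + 2ln`. -/
lemma normSq_freeEvolution {S D : Finset ℤ} {c : ℤ → ℂ} (hS : ∀ k ∉ S, c k = 0)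
    (hD : ∀ k ∈ S, ∀ l ∈ S, k - l ∈ D) (t x : ℝ) :
    ((‖freeEvolution c t x‖ ^ 2 : ℝ) : ℂ)
      = ∑ n ∈ D, (cexp (-I * (n : ℂ) ^ 2 * t) * autocorr S c n t) * cexp (I * n * x) := by
  classical
  set b : ℤ → ℂ := fun k => c k * cexp (-I * (k : ℂ) ^ 2 * t) * cexp (I * (k : ℂ) * x) with hb
  have hb0 : ∀ k ∉ S, b k = 0 := fun k hk => by simp [hb, hS k hk]
  have shift : ∀ l ∈ S, ∑ k ∈ S, b k = ∑ n ∈ D, b (l + n) := by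
    intro l hl
    rw [← Finset.sum_image (f := b) (g := fun n => l + n) (fun x _ y _ h => by simpa using h)]
    refine Finset.sum_subset (fun k hk => ?_) (fun k _ hk => hb0 k hk)
    exact Finset.mem_image.2 ⟨k - l, hD k hk l hl, by ring⟩
  have h1 : ((‖freeEvolution c t x‖ ^ 2 : ℝ) : ℂ)
      = ∑ l ∈ S, ∑ n ∈ D, b (l + n) * (starRingEnd ℂ) (b l) := by
    push_cast
    rw [← Complex.mul_conj', freeEvolution_eq_sum hS, map_sum, Finset.mul_sum]
    refine Finset.sum_congr rfl fun l hl => ?_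
    rw [← Finset.sum_mul, ← shift l hl]
  rw [h1, Finset.sum_comm]
  refine Finset.sum_congr rfl fun n _ => ?_
  rw [autocorr, Finset.mul_sum, Finset.sum_mul]
  refine Finset.sum_congr rfl fun l _ => ?_
  have h2 : cexp (-I * ((l + n : ℤ) : ℂ) ^ 2 * t) * cexp (I * ((l + n : ℤ) : ℂ) * x)
      * ((starRingEnd ℂ) (cexp (-I * (l : ℂ) ^ 2 * t)) * (starRingEnd ℂ) (cexp (I * (l : ℂ) * x)))
      = cexp (-I * (n : ℂ) ^ 2 * t) * cexp (I * l * (-2 * n * t : ℝ)) * cexp (I * n * x) := by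
    simp only [← Complex.exp_conj, ← Complex.exp_add]
    congr 1
    simp
    ring
  simp only [hb, map_mul]
  linear_combination (c (l + n) * (starRingEnd ℂ) (c l)) * h2

lemma integral_norm_pow_four {S D : Finset ℤ} {c : ℤ → ℂ} (hS : ∀ k ∉ S, c k = 0)
    (hD : ∀ k ∈ S, ∀ l ∈ S, k - l ∈ D) (t : ℝ) :
    ∫ x in (0:ℝ)..(2 * π), ‖freeEvolution c t x‖ ^ 4
      = 2 * π * ∑ n ∈ D, ‖autocorr S c n t‖ ^ 2 := by
  have h1 : ∀ x : ℝ, ‖freeEvolution c t x‖ ^ 4 = ‖∑ n ∈ D,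
      (cexp (-I * (n : ℂ) ^ 2 * t) * autocorr S c n t) * cexp (I * n * x)‖ ^ 2 := by
    intro x
    rw [← normSq_freeEvolution hS hD, Complex.norm_real, norm_pow, norm_norm]
    ring
  simp_rw [h1]
  rw [integral_norm_sq_trigPoly]
  congr 1
  refine Finset.sum_congr rfl fun n _ => ?_
  have : ‖cexp (-I * (n : ℂ) ^ 2 * t)‖ = 1 := by
    rw [show -I * (n : ℂ) ^ 2 * t = ((-(n : ℝ) ^ 2 * t : ℝ) : ℂ) * I by push_cast; ring]
    exact Complex.norm_exp_ofReal_mul_I _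
  rw [norm_mul, this, one_mul]

/-! ### Low and high frequencies -/

lemma card_low_frequencies (D : Finset ℤ) {T : ℝ} (hT : 0 < T) (hT1 : T < 1) :
    ((D.filter fun n : ℤ => |(n : ℝ)| * √T < 1).card : ℝ) * √T ≤ 3 := by
  have hs : 0 < √T := Real.sqrt_pos.2 hT
  have hs1 : √T ≤ 1 := Real.sqrt_le_one.2 hT1.le
  set N : ℕ := ⌊1 / √T⌋₊ with hN
  have hN1 : (N : ℝ) * √T ≤ 1 := by
    rw [← le_div_iff₀ hs]; exact Nat.floor_le (by positivity)
  have hsub : (D.filter fun n : ℤ => |(n : ℝ)| * √T < 1) ⊆ Finset.Icc (-(N : ℤ)) N := by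
    intro n hn
    have h1 := (Finset.mem_filter.1 hn).2
    rw [← lt_div_iff₀ hs] at h1
    have h2 : n.natAbs ≤ N := Nat.le_floor (by rw [Nat.cast_natAbs, Int.cast_abs]; exact h1.le)
    rw [Finset.mem_Icc]
    omega
  have hcard := Finset.card_le_card hsub
  rw [Int.card_Icc] at hcard
  have h3 : (D.filter fun n : ℤ => |(n : ℝ)| * √T < 1).card ≤ 2 * N + 1 := by omega
  calc _ ≤ ((2 * N + 1 : ℕ) : ℝ) * √T := by gcongr
    _ = 2 * (N * √T) + √T := by push_cast; ring
    _ ≤ 3 := by linarith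

/-- For `|n| < T^{-1/2}` the coefficient is bounded pointwise in `t`; for `|n| ≥ T^{-1/2}` it
oscillates in `t` with period `π/|n| ≤ π T^{1/2}`, and Parseval in `t` applies. -/
lemma integral_autocorr_le {S : Finset ℤ} {c : ℤ → ℂ} (hS : ∀ k ∉ S, c k = 0) {T : ℝ}
    (hT : 0 < T) (hT1 : T < 1) (n : ℤ) :
    ∫ t in (-T)..T, ‖autocorr S c n t‖ ^ 2
      ≤ (if |(n : ℝ)| * √T < 1 then 2 * T * (∑ k ∈ S, ‖c k‖ ^ 2) ^ 2 else 0)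
        + 6 * √T * ∑ l ∈ S, ‖c (l + n)‖ ^ 2 * ‖c l‖ ^ 2 := by
  have hs : 0 < √T := Real.sqrt_pos.2 hT
  have hs1 : √T ≤ 1 := Real.sqrt_le_one.2 hT1.le
  have hsq : √T * √T = T := Real.mul_self_sqrt hT.le
  have hnn : 0 ≤ 6 * √T * ∑ l ∈ S, ‖c (l + n)‖ ^ 2 * ‖c l‖ ^ 2 := by positivity
  split_ifs with h
  · have hcont : Continuous fun t : ℝ => ‖autocorr S c n t‖ ^ 2 := by
      unfold autocorr
      fun_prop
    have : ∫ t in (-T)..T, ‖autocorr S c n t‖ ^ 2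
        ≤ ∫ t in (-T)..T, (∑ k ∈ S, ‖c k‖ ^ 2) ^ 2 := by
      refine intervalIntegral.integral_mono_on (by linarith) (hcont.intervalIntegrable _ _)
        intervalIntegrable_const fun t _ => ?_
      gcongr
      exact norm_autocorr_le hS n t
    rw [intervalIntegral.integral_const, smul_eq_mul] at this
    linarith
  · have hn : 0 < |(n : ℝ)| := by
      by_contra h0
      have : |(n : ℝ)| = 0 := le_antisymm (not_lt.1 h0) (abs_nonneg _)
      simp [this] at h
    have hm : (-2 * n : ℝ) ≠ 0 := mul_ne_zero (by norm_num) (abs_pos.1 hn)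
    have hperiod : 2 * π / |(-2 * n : ℝ)| ≤ π * √T := by
      rw [abs_mul, show |(-2 : ℝ)| = 2 by norm_num, div_le_iff₀ (by positivity)]
      nlinarith [pi_pos]
    have hcoef : 2 * T + 2 * π / |(-2 * n : ℝ)| ≤ 6 * √T := by
      nlinarith [pi_lt_four]
    have hD := integral_norm_sq_trigPoly_dilate_le S
      (fun l => c (l + n) * (starRingEnd ℂ) (c l)) hT hm
    simp only [norm_mul, RCLike.norm_conj, mul_pow] at hD
    rw [zero_add]
    calc _ ≤ _ := hD
      _ ≤ _ := by gcongr

lemma integral_integral_norm_pow_four_le {S : Finset ℤ} {c : ℤ → ℂ} (hS : ∀ k ∉ S, c k = 0)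
    {T : ℝ} (hT : 0 < T) (hT1 : T < 1) :
    ∫ t in (-T)..T, ∫ x in (0:ℝ)..(2 * π), ‖freeEvolution c t x‖ ^ 4
      ≤ 24 * π * √T * (∑ k ∈ S, ‖c k‖ ^ 2) ^ 2 := by
  classical
  set E : ℝ := ∑ k ∈ S, ‖c k‖ ^ 2 with hE
  set D : Finset ℤ := (S ×ˢ S).image fun p => p.1 - p.2 with hDdef
  have hD : ∀ k ∈ S, ∀ l ∈ S, k - l ∈ D := fun k hk l hl =>
    Finset.mem_image.2 ⟨(k, l), Finset.mk_mem_product hk hl, rfl⟩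
  have hsq : √T * √T = T := Real.mul_self_sqrt hT.le
  -- the two summands of `integral_autocorr_le`, summed over the frequencies `n ∈ D`
  have low : ∑ n ∈ D, (if |(n : ℝ)| * √T < 1 then 2 * T * E ^ 2 else 0) ≤ 6 * √T * E ^ 2 := by
    rw [← Finset.sum_filter, Finset.sum_const, nsmul_eq_mul]
    calc _ = ((D.filter fun n : ℤ => |(n : ℝ)| * √T < 1).card * √T) * (2 * √T * E ^ 2) := by
          linear_combination
            -2 * ((D.filter fun n : ℤ => |(n : ℝ)| * √T < 1).card : ℝ) * E ^ 2 * hsq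
      _ ≤ 3 * (2 * √T * E ^ 2) := by
          gcongr
          exact card_low_frequencies D hT hT1
      _ = _ := by ring
  have high : ∑ n ∈ D, ∑ l ∈ S, ‖c (l + n)‖ ^ 2 * ‖c l‖ ^ 2 ≤ E ^ 2 := by
    rw [Finset.sum_comm]
    calc _ = ∑ l ∈ S, (∑ n ∈ D, ‖c (n + l)‖ ^ 2) * ‖c l‖ ^ 2 := by
          simp_rw [Finset.sum_mul, add_comm]
      _ ≤ ∑ l ∈ S, E * ‖c l‖ ^ 2 := by
          gcongr with l hl
          exact sum_shift_le (f := fun k => ‖c k‖ ^ 2) (fun k => by positivity)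
            (fun k hk => by simp [hS k hk]) D l
      _ = E ^ 2 := by rw [← Finset.mul_sum, sq]
  have hcont : ∀ n, Continuous fun t : ℝ => ‖autocorr S c n t‖ ^ 2 := by
    intro n
    unfold autocorr
    fun_prop
  simp_rw [integral_norm_pow_four hS hD]
  rw [intervalIntegral.integral_const_mul, intervalIntegral.integral_finsetSum
    fun n _ => (hcont n).intervalIntegrable _ _]
  have hsum := Finset.sum_le_sum fun n (_ : n ∈ D) => integral_autocorr_le hS hT hT1 n
  rw [Finset.sum_add_distrib, ← Finset.mul_sum] at hsum
  have htot : ∑ n ∈ D, ∫ t in (-T)..T, ‖autocorr S c n t‖ ^ 2 ≤ 12 * √T * E ^ 2 := by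
    have := mul_le_mul_of_nonneg_left high (by positivity : 0 ≤ 6 * √T)
    linarith
  calc _ ≤ 2 * π * (12 * √T * E ^ 2) := by gcongr
    _ = _ := by ring

/-- **Short-time `L⁴` estimate for the free evolution:** for `0 < T < 1`,
`(∫_{−T}^{T} ∫_𝕋 |V(t)φ|⁴)^{1/4} ≤ C T^{1/8} (Σ_k |c(k)|²)^{1/2}`. -/
theorem free_evolution_L4_short_time :
    ∃ C > (0:ℝ), ∀ T : ℝ, 0 < T → T < 1 → ∀ c : ℤ → ℂ, (Function.support c).Finite →
      (∫ t in (-T)..T, ∫ x in (0:ℝ)..(2 * π), ‖freeEvolution c t x‖ ^ 4) ^ ((1:ℝ)/4)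
        ≤ C * T ^ ((1:ℝ)/8) * (∑' k : ℤ, ‖c k‖ ^ 2) ^ ((1:ℝ)/2) := by
  refine ⟨(24 * π) ^ ((1:ℝ)/4), by positivity, fun T hT hT1 c hc => ?_⟩
  have hS : ∀ k ∉ hc.toFinset, c k = 0 := fun k hk => by simpa using hk
  rw [tsum_eq_sum (s := hc.toFinset) fun k hk => by simp [hS k hk]]
  set E : ℝ := ∑ k ∈ hc.toFinset, ‖c k‖ ^ 2 with hE
  have hE0 : 0 ≤ E := by positivity
  have hI0 : 0 ≤ ∫ t in (-T)..T, ∫ x in (0:ℝ)..(2 * π), ‖freeEvolution c t x‖ ^ 4 :=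
    intervalIntegral.integral_nonneg (by linarith) fun t _ =>
      intervalIntegral.integral_nonneg (by positivity) fun x _ => by positivity
  calc _ ≤ (24 * π * √T * E ^ 2) ^ ((1:ℝ)/4) :=
        Real.rpow_le_rpow hI0 (integral_integral_norm_pow_four_le hS hT hT1) (by norm_num)
    _ = _ := by
        rw [Real.mul_rpow (by positivity) (by positivity),
          Real.mul_rpow (by positivity) (by positivity), Real.sqrt_eq_rpow,
          ← Real.rpow_mul hT.le, ← Real.rpow_natCast E 2, ← Real.rpow_mul hE0]
        norm_num
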